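/- arXiv:2411.09712 — 2 statements merged into one kernel-verified Lean document; each statement's English description precedes it below -/
import Mathlib

section
/- Let φ > 0 and H > 0 be real numbers and let q, q₀, p be points of the Euclidean plane ℝ². Then log₂(1 + φ/(H² + ‖q - p‖²)) ≥ log₂(1 + φ/(H² + ‖q₀ - p‖²)) - φ·(log₂ e)·(‖q - p‖² - ‖q₀ - p‖²)/((φ + H² + ‖q₀ - p‖²)·(H² + ‖q₀ - p‖²)). -/
theorem rate_aux (φ a x : ℝ) (hφ : 0 < φ) (ha : 0 < a) (hx : 0 < x) :
    Real.log (1 + φ / a) - Real.log (1 + φ / x) ≤ φ * (x - a) / ((φ + a) * a) := by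
  have h1 : 0 < 1 + φ / a := by positivity
  have h2 : 0 < 1 + φ / x := by positivity
  rw [← Real.log_div h1.ne' h2.ne']
  refine (Real.log_le_sub_one_of_pos (div_pos h1 h2)).trans ?_
  have e : φ * (x - a) / ((φ + a) * a) - ((1 + φ / a) / (1 + φ / x) - 1)
      = φ * (x - a) ^ 2 / ((φ + a) * a * (x + φ)) := by
    have : x + φ ≠ 0 := by positivity
    have : φ + a ≠ 0 := by positivity
    have e2 : (1 + φ / a) / (1 + φ / x) = (a + φ) * x / (a * (x + φ)) := by
      field_simp
    rw [e2]
    field_simp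
    ring
  have : 0 ≤ φ * (x - a) ^ 2 / ((φ + a) * a * (x + φ)) := by positivity
  linarith

/-- Theorem 5: global concave lower bound of the achievable-rate function
`g(q) = log₂(1 + φ/(H² + ‖q - p‖²))` obtained from its first-order expansion
at a local point `q₀`. -/
theorem rate_function_sca_lower_bound (φ H : ℝ) (hφ : 0 < φ) (hH : 0 < H)
    (q q₀ p : EuclideanSpace ℝ (Fin 2)) :
    Real.logb 2 (1 + φ / (H ^ 2 + ‖q - p‖ ^ 2))
      ≥ Real.logb 2 (1 + φ / (H ^ 2 + ‖q₀ - p‖ ^ 2))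
        - φ * Real.logb 2 (Real.exp 1) * (‖q - p‖ ^ 2 - ‖q₀ - p‖ ^ 2)
            / ((φ + H ^ 2 + ‖q₀ - p‖ ^ 2) * (H ^ 2 + ‖q₀ - p‖ ^ 2)) := by
  have ha : 0 < H ^ 2 + ‖q₀ - p‖ ^ 2 := by positivity
  have hx : 0 < H ^ 2 + ‖q - p‖ ^ 2 := by positivity
  have h := rate_aux φ _ _ hφ ha hx
  have hl : 0 < Real.log 2 := Real.log_pos (by norm_num)
  have h' := div_le_div_of_nonneg_right h hl.le
  rw [sub_div] at h'
  simp only [Real.logb, Real.log_exp]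
  have e : φ * (1 / Real.log 2) * (‖q - p‖ ^ 2 - ‖q₀ - p‖ ^ 2)
            / ((φ + H ^ 2 + ‖q₀ - p‖ ^ 2) * (H ^ 2 + ‖q₀ - p‖ ^ 2))
      = φ * (H ^ 2 + ‖q - p‖ ^ 2 - (H ^ 2 + ‖q₀ - p‖ ^ 2))
        / ((φ + (H ^ 2 + ‖q₀ - p‖ ^ 2)) * (H ^ 2 + ‖q₀ - p‖ ^ 2)) / Real.log 2 := by
    rw [add_sub_add_left_eq_sub, ← add_assoc]
    ring
  rw [e]
  linarith
end

section
/- Fix n ∈ ℕ and real parameters LC_i, KU_i, KC_i, φ_i, γ_i for each i ∈ Fin n. A strategy profile is a function a : Fin n → {L, U, C} over a three-element strategy type. Define the utility U_i(a) = LC_i if a_i = L; U_i(a) = KU_i + φ_i·(Σ_{j : a_j = U} φ_j) + γ_i·(Σ_{j : a_j ∈ {U,C}} γ_j) if a_i = U; and U_i(a) = KC_i + γ_i·(Σ_{j : a_j ∈ {U,C}} γ_j) if a_i = C. Define the potential F(a) = Σ_{i : a_i = U} (KU_i + φ_i·Σ_{j ≤ i, a_j = U} φ_j) + Σ_{i :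 a_i = C} KC_i + Σ_{i : a_i ∈ {U,C}} γ_i·(Σ_{j ≤ i, a_j ∈ {U,C}} γ_j) + Σ_{i : a_i = L} LC_i. Then for every player i ∈ Fin n and every pair of strategy profiles a, a' with a_j = a'_j for all j ≠ i, one has U_i(a) - U_i(a') = F(a) - F(a'). -/
open Finset

/-- Offloading strategies: local computing, UAV-assisted computing,
cloud-assisted computing. -/
inductive OffloadStrat : Type
  | L : OffloadStrat
  | U : OffloadStrat
  | C : OffloadStrat
  deriving DecidableEq

/-- Utility of player `i` under profile `a` (after substituting the optimal
resource allocation). -/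
def MIoTDUtil {n : ℕ} (LC KU KC φ γ : Fin n → ℝ)
    (a : Fin n → OffloadStrat) (i : Fin n) : ℝ :=
  match a i with
  | OffloadStrat.L => LC i
  | OffloadStrat.U =>
      KU i + φ i * (∑ j ∈ univ.filter (fun j => a j = OffloadStrat.U), φ j)
        + γ i * (∑ j ∈ univ.filter
            (fun j => a j = OffloadStrat.U ∨ a j = OffloadStrat.C), γ j)
  | OffloadStrat.C =>
      KC i + γ i * (∑ j ∈ univ.filter
            (fun j => a j = OffloadStrat.U ∨ a j = OffloadStrat.C), γ j)

/-- The potential function `F` of equation (62). -/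
def MIoTDPot {n : ℕ} (LC KU KC φ γ : Fin n → ℝ)
    (a : Fin n → OffloadStrat) : ℝ :=
  (∑ i ∈ univ.filter (fun i => a i = OffloadStrat.U),
      (KU i + φ i * ∑ j ∈ univ.filter
          (fun j => j ≤ i ∧ a j = OffloadStrat.U), φ j))
  + (∑ i ∈ univ.filter (fun i => a i = OffloadStrat.C), KC i)
  + (∑ i ∈ univ.filter
        (fun i => a i = OffloadStrat.U ∨ a i = OffloadStrat.C),
      γ i * ∑ j ∈ univ.filter
          (fun j => j ≤ i ∧ (a j = OffloadStrat.U ∨ a j = OffloadStrat.C)), γ j)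
  + (∑ i ∈ univ.filter (fun i => a i = OffloadStrat.L), LC i)

theorem quad_aux {n : ℕ} (p : Fin n → Prop) [DecidablePred p] (f : Fin n → ℝ) :
    ∑ k ∈ univ.filter p, f k * ∑ j ∈ univ.filter (fun j => j ≤ k ∧ p j), f j
      = ((∑ k ∈ univ.filter p, f k) ^ 2 + ∑ k ∈ univ.filter p, f k ^ 2) / 2 := by
  have e1 : ∑ k ∈ univ.filter p, f k * ∑ j ∈ univ.filter (fun j => j ≤ k ∧ p j), f j
      = ∑ k ∈ univ.filter p, ∑ j ∈ univ.filter p, if j ≤ k then f k * f j else 0 := by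
    refine Finset.sum_congr rfl fun k _ => ?_
    rw [Finset.mul_sum, ← Finset.sum_filter, Finset.filter_filter]
    refine Finset.sum_congr ?_ fun _ _ => rfl
    ext j
    simp [and_comm]
  have e2 : ∑ k ∈ univ.filter p, ∑ j ∈ univ.filter p, (if j ≤ k then f k * f j else 0)
      = ∑ k ∈ univ.filter p, ∑ j ∈ univ.filter p, if k ≤ j then f k * f j else 0 := by
    rw [Finset.sum_comm]
    simp only [mul_comm]
  have e3 : ∑ k ∈ univ.filter p, ∑ j ∈ univ.filter p, (if j ≤ k then f k * f j else 0)
      + ∑ k ∈ univ.filter p, ∑ j ∈ univ.filter p, (if k ≤ j then f k * f j else 0)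
      = (∑ k ∈ univ.filter p, f k) ^ 2 + ∑ k ∈ univ.filter p, f k ^ 2 := by
    rw [sq (∑ k ∈ univ.filter p, f k), Finset.sum_mul_sum, ← Finset.sum_add_distrib,
      ← Finset.sum_add_distrib]
    refine Finset.sum_congr rfl fun k hk => ?_
    have : f k ^ 2 = ∑ j ∈ univ.filter p, if k = j then f k * f j else 0 := by
      rw [Finset.sum_ite_eq, if_pos hk, sq]
    rw [this, ← Finset.sum_add_distrib, ← Finset.sum_add_distrib]
    refine Finset.sum_congr rfl fun j _ => ?_
    rcases lt_trichotomy j k with h | h | h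
    · simp [h.le, h.not_ge, h.ne']
    · simp [h]
    · simp [h.le, h.not_ge, h.ne]
  rw [e1]
  linarith

theorem split_aux {n : ℕ} (p : Fin n → Prop) [DecidablePred p] (f : Fin n → ℝ) (i : Fin n) :
    ∑ k ∈ univ.filter p, f k
      = ∑ k ∈ (univ.erase i).filter p, f k + if p i then f i else 0 := by
  rw [Finset.sum_filter, Finset.sum_filter, Finset.sum_erase_add _ _ (Finset.mem_univ i)]

/-- Theorem 6: the multi-IoTD computation offloading game is an exact potential
game with potential function `MIoTDPot`. -/
theorem MIoTD_exact_potential_game {n : ℕ} (LC KU KC φ γ : Fin n → ℝ)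
    (i : Fin n) (a a' : Fin n → OffloadStrat)
    (h : ∀ j, j ≠ i → a j = a' j) :
    MIoTDUtil LC KU KC φ γ a i - MIoTDUtil LC KU KC φ γ a' i
      = MIoTDPot LC KU KC φ γ a - MIoTDPot LC KU KC φ γ a' := by
  have hf : ∀ q : OffloadStrat → Prop, ∀ [DecidablePred q],
      (univ.erase i).filter (fun k => q (a k)) = (univ.erase i).filter (fun k => q (a' k)) := by
    intro q _
    refine Finset.filter_congr fun k hk => ?_
    rw [h k (Finset.ne_of_mem_erase hk)]
  have hU := hf (fun s => s = OffloadStrat.U)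
  have hC := hf (fun s => s = OffloadStrat.C)
  have hL := hf (fun s => s = OffloadStrat.L)
  have hUC := hf (fun s => s = OffloadStrat.U ∨ s = OffloadStrat.C)
  unfold MIoTDUtil MIoTDPot
  simp only [Finset.sum_add_distrib, quad_aux (fun k => a k = OffloadStrat.U),
    quad_aux (fun k => a' k = OffloadStrat.U),
    quad_aux (fun k => a k = OffloadStrat.U ∨ a k = OffloadStrat.C),
    quad_aux (fun k => a' k = OffloadStrat.U ∨ a' k = OffloadStrat.C)]
  simp only [split_aux _ _ i, hU, hC, hL, hUC]
  cases a i <;> cases a' i <;> simp <;> ring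
end
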